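/- Fix λ0 ∈ ℝ and let g be an exchangeable prior with ∫ τ′τ g(dτ) < ∞. Let d be a symmetric design satisfying ∑_{s∈R} p_s r_s′(x_0) = 0 (where r_s′ is the derivative of r_s) and p_s = 0 for every s ∉ R. Then for every design d′ and every generalized inverse G′ of A_{d′22}: ∫ τ′ A_{d′}(G′) τ g(dτ) ≤ ∫ τ′ A_d(G) τ g(dτ), for any generalized inverse G of A_{d22}. -/

import Mathlib

open Matrix MeasureTheory
open scoped Classical

noncomputable section

/-- A treatment sequence: assigns a treatment in `Fin t` to each period in `Fin p`. -/
abbrev TrtSeq (p t : ℕ) := Fin p → Fin t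

/-- Treatment/period incidence matrix `T_s`. -/
def Tmat {p t : ℕ} (s : TrtSeq p t) : Matrix (Fin p) (Fin t) ℝ :=
  Matrix.of fun k i => if s k = i then 1 else 0

/-- Carryover incidence matrix `F_s`: first row zero, row `k` records the treatment
in period `k-1`. -/
def Fmat {p t : ℕ} (s : TrtSeq p t) : Matrix (Fin p) (Fin t) ℝ :=
  Matrix.of fun k i =>
    if (k : ℕ) = 0 then 0
    else if s ⟨(k : ℕ) - 1, Nat.lt_of_le_of_lt (Nat.sub_le _ _) k.isLt⟩ = i then 1 else 0

/-- The all-ones `m × m` matrix `J_m`. -/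
def Jmat (m : ℕ) : Matrix (Fin m) (Fin m) ℝ := Matrix.of fun _ _ => 1

/-- `B_t = I_t - J_t / t`. -/
def Bmat (t : ℕ) : Matrix (Fin t) (Fin t) ℝ := 1 - ((t : ℝ))⁻¹ • Jmat t

/-- `B̃ = Σ⁻¹ - Σ⁻¹ J_p Σ⁻¹ / (1_p' Σ⁻¹ 1_p)`. -/
def Btil {p : ℕ} (S : Matrix (Fin p) (Fin p) ℝ) : Matrix (Fin p) (Fin p) ℝ :=
  S⁻¹ - (((fun _ => (1 : ℝ)) : Fin p → ℝ) ⬝ᵥ (S⁻¹ *ᵥ fun _ => (1 : ℝ)))⁻¹ •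
    (S⁻¹ * Jmat p * S⁻¹)

/-- `G_1(s) = T_s`, `G_2(s) = F_s`. -/
def Gmat {p t : ℕ} (i : Fin 2) (s : TrtSeq p t) : Matrix (Fin p) (Fin t) ℝ :=
  if i = 0 then Tmat s else Fmat s

/-- An approximate design: nonnegative weights summing to one. -/
def IsDesign {p t : ℕ} (w : TrtSeq p t → ℝ) : Prop :=
  (∀ s, 0 ≤ w s) ∧ ∑ s : TrtSeq p t, w s = 1

/-- `Ĉ_{sij} = B_t G_i(s)' B̃ G_j(s) B_t`. -/
def Chat {p t : ℕ} (S : Matrix (Fin p) (Fin p) ℝ) (s : TrtSeq p t) (i j : Fin 2) :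
    Matrix (Fin t) (Fin t) ℝ :=
  Bmat t * (Gmat i s)ᵀ * Btil S * Gmat j s * Bmat t

/-- `c_{sij} = tr Ĉ_{sij}`. -/
def cseq {p t : ℕ} (S : Matrix (Fin p) (Fin p) ℝ) (s : TrtSeq p t) (i j : Fin 2) : ℝ :=
  (Chat S s i j).trace

/-- `Ĉ_{dij} = n ∑_s p_s Ĉ_{sij}`. -/
def ChatD {p t : ℕ} (n : ℕ) (S : Matrix (Fin p) (Fin p) ℝ) (w : TrtSeq p t → ℝ)
    (i j : Fin 2) : Matrix (Fin t) (Fin t) ℝ :=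
  (n : ℝ) • ∑ s : TrtSeq p t, w s • Chat S s i j

/-- `C_{dij} = Ĉ_{dij} - n (∑_s p_s G_i(s) B_t)' B̃ (∑_s p_s G_j(s) B_t)`. -/
def CD {p t : ℕ} (n : ℕ) (S : Matrix (Fin p) (Fin p) ℝ) (w : TrtSeq p t → ℝ)
    (i j : Fin 2) : Matrix (Fin t) (Fin t) ℝ :=
  ChatD n S w i j -
    (n : ℝ) • ((∑ s : TrtSeq p t, w s • (Gmat i s * Bmat t))ᵀ * Btil S *
      (∑ s : TrtSeq p t, w s • (Gmat j s * Bmat t)))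

/-- `c_{dij} = tr Ĉ_{dij} = n ∑_s p_s c_{sij}`. -/
def cD {p t : ℕ} (n : ℕ) (S : Matrix (Fin p) (Fin p) ℝ) (w : TrtSeq p t → ℝ)
    (i j : Fin 2) : ℝ :=
  (ChatD n S w i j).trace

/-- Fisher information matrix `C_{d,τ0,λ0}` for the direct treatment effects under the
proportional model. -/
def CInfo {p t : ℕ} (n : ℕ) (S : Matrix (Fin p) (Fin p) ℝ) (w : TrtSeq p t → ℝ)
    (τ0 : Fin t → ℝ) (l0 : ℝ) : Matrix (Fin t) (Fin t) ℝ :=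
  CD n S w 0 0 + l0 • (CD n S w 0 1 + CD n S w 1 0) + (l0 ^ 2) • CD n S w 1 1 -
    (τ0 ⬝ᵥ (CD n S w 1 1 *ᵥ τ0))⁻¹ •
      ((CD n S w 0 1 + l0 • CD n S w 1 1) * vecMulVec τ0 τ0 *
        (CD n S w 1 0 + l0 • CD n S w 1 1))

/-- Permutation matrix `S_σ` with `(S_σ)_{j,i} = 1` iff `i = σ j`. -/
def Smat {t : ℕ} (σ : Equiv.Perm (Fin t)) : Matrix (Fin t) (Fin t) ℝ :=
  Matrix.of fun j i => if i = σ j then 1 else 0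

/-- The relabelled sequence `σ ∘ s`. -/
def permSeq {p t : ℕ} (σ : Equiv.Perm (Fin t)) (s : TrtSeq p t) : TrtSeq p t := fun k => σ (s k)

/-- The design `σ d`, with weights `(σd)_s = p_{σ⁻¹ ∘ s}`. -/
def permDesign {p t : ℕ} (σ : Equiv.Perm (Fin t)) (w : TrtSeq p t → ℝ) : TrtSeq p t → ℝ :=
  fun s => w (permSeq σ⁻¹ s)

/-- A design is symmetric if its weights are invariant under treatment relabelling. -/
def IsSymmetricDesign {p t : ℕ} (w : TrtSeq p t → ℝ) : Prop :=
  ∀ (σ : Equiv.Perm (Fin t)) (s : TrtSeq p t), w (permSeq σ s) = w s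

/-- The symmetrized design `d*` with weights `p*_s = (1/t!) ∑_σ p_{σ⁻¹ ∘ s}`. -/
def symmetrize {p t : ℕ} (w : TrtSeq p t → ℝ) : TrtSeq p t → ℝ :=
  fun s => ((Nat.factorial t : ℝ))⁻¹ * ∑ σ : Equiv.Perm (Fin t), permDesign σ w s

/-- `q_s(x) = c_{s11} + 2 c_{s12} x + c_{s22} x²`. -/
def qSeq {p t : ℕ} (S : Matrix (Fin p) (Fin p) ℝ) (s : TrtSeq p t) (x : ℝ) : ℝ :=
  cseq S s 0 0 + 2 * cseq S s 0 1 * x + cseq S s 1 1 * x ^ 2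

/-- `q(x) = max_{s ∈ S} q_s(x)`. -/
def qMax (p t : ℕ) (S : Matrix (Fin p) (Fin p) ℝ) (x : ℝ) : ℝ :=
  sSup (Set.range fun s : TrtSeq p t => qSeq S s x)

/-- `y* = inf_x q(x)`. -/
def yStar (p t : ℕ) (S : Matrix (Fin p) (Fin p) ℝ) : ℝ := ⨅ x : ℝ, qMax p t S x

/-- `q_d(x) = ∑_s p_s q_s(x)`. -/
def qD {p t : ℕ} (S : Matrix (Fin p) (Fin p) ℝ) (w : TrtSeq p t → ℝ) (x : ℝ) : ℝ :=
  ∑ s : TrtSeq p t, w s * qSeq S s x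

/-- `x_d = -c_{d12}/c_{d22}`. -/
def xD {p t : ℕ} (n : ℕ) (S : Matrix (Fin p) (Fin p) ℝ) (w : TrtSeq p t → ℝ) : ℝ :=
  -(cD n S w 0 1) / cD n S w 1 1

/-- An exchangeable prior: a probability measure on `{τ : 1'τ = 0, τ ≠ 0}` that is
invariant under all coordinate permutations of `ℝ^t`. -/
def IsExchangeablePrior {t : ℕ} (g : Measure (Fin t → ℝ)) : Prop :=
  IsProbabilityMeasure g ∧
    g {τ : Fin t → ℝ | ¬((∑ i, τ i) = 0 ∧ τ ≠ 0)} = 0 ∧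
    ∀ σ : Equiv.Perm (Fin t), Measure.map (fun τ i => τ (σ i)) g = g

/-- `m_d(τ0) = min {ℓ' C_{d,τ0,λ0} ℓ : 1'ℓ = 0, ℓ'ℓ = 1}`. -/
def mD {p t : ℕ} (n : ℕ) (S : Matrix (Fin p) (Fin p) ℝ) (w : TrtSeq p t → ℝ) (l0 : ℝ)
    (τ0 : Fin t → ℝ) : ℝ :=
  sInf {v : ℝ | ∃ l : Fin t → ℝ, (∑ i, l i) = 0 ∧ l ⬝ᵥ l = 1 ∧
    v = l ⬝ᵥ (CInfo n S w τ0 l0 *ᵥ l)}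

/-- The E-criterion value `E_{g,λ0}(d) = ∫ m_d(τ0) g(dτ0)`. -/
def Ecrit {p t : ℕ} (n : ℕ) (S : Matrix (Fin p) (Fin p) ℝ) (g : Measure (Fin t → ℝ))
    (l0 : ℝ) (w : TrtSeq p t → ℝ) : ℝ :=
  ∫ τ0, mD n S w l0 τ0 ∂g

/-- Competing designs for E-optimality: designs with a.e. positive `τ0' C_{d22} τ0`
and `g`-integrable `m_d`. -/
def EAdmissible {p t : ℕ} (n : ℕ) (S : Matrix (Fin p) (Fin p) ℝ) (g : Measure (Fin t → ℝ))
    (l0 : ℝ) (w : TrtSeq p t → ℝ) : Prop :=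
  IsDesign w ∧ (∀ᵐ τ0 ∂g, 0 < τ0 ⬝ᵥ (CD n S w 1 1 *ᵥ τ0)) ∧
    Integrable (mD n S w l0) g

/-- `d` is `E_{g,λ0}`-optimal. -/
def EOptimal {p t : ℕ} (n : ℕ) (S : Matrix (Fin p) (Fin p) ℝ) (g : Measure (Fin t → ℝ))
    (l0 : ℝ) (w : TrtSeq p t → ℝ) : Prop :=
  ∀ w' : TrtSeq p t → ℝ, EAdmissible n S g l0 w' → Ecrit n S g l0 w' ≤ Ecrit n S g l0 w

/-- A pseudo symmetric design: treatments equireplicated in each period,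
and all `C_{dij}` completely symmetric. -/
def IsPseudoSymmetric {p t : ℕ} (n : ℕ) (S : Matrix (Fin p) (Fin p) ℝ)
    (w : TrtSeq p t → ℝ) : Prop :=
  (∀ (k : Fin p) (i : Fin t),
    (∑ s ∈ Finset.univ.filter fun s : TrtSeq p t => s k = i, w s) = 1 / (t : ℝ)) ∧
  ∀ i j : Fin 2, ∃ a b : ℝ, CD n S w i j = a • (1 : Matrix (Fin t) (Fin t) ℝ) + b • Jmat t

/-- Eigenvalues of a (Hermitian) matrix sorted increasingly with multiplicity. -/
def sortedEigs {t : ℕ} (C : Matrix (Fin t) (Fin t) ℝ) : Fin t → ℝ :=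
  if h : C.IsHermitian then (fun i => h.eigenvalues (Tuple.sort h.eigenvalues i))
  else fun _ => 0

/-- `Φ_D(C) = (∏_{i=1}^{t-1} a_i)^{1/(t-1)}` (eigenvalues sorted increasingly). -/
def PhiD {t : ℕ} (C : Matrix (Fin t) (Fin t) ℝ) : ℝ :=
  (∏ i ∈ Finset.univ.filter fun i : Fin t => (i : ℕ) ≠ 0, sortedEigs C i) ^ (((t : ℝ) - 1)⁻¹)

/-- `Φ_A(C) = (t-1)(∑_{i=1}^{t-1} a_i⁻¹)⁻¹` if `a_1 > 0`, else `0`. -/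
def PhiA {t : ℕ} (C : Matrix (Fin t) (Fin t) ℝ) : ℝ :=
  if ∀ i : Fin t, (i : ℕ) ≠ 0 → 0 < sortedEigs C i then
    ((t : ℝ) - 1) *
      (∑ i ∈ Finset.univ.filter fun i : Fin t => (i : ℕ) ≠ 0, (sortedEigs C i)⁻¹)⁻¹
  else 0

/-- `Φ_T(C) = tr(C)/(t-1)`. -/
def PhiT {t : ℕ} (C : Matrix (Fin t) (Fin t) ℝ) : ℝ := C.trace / ((t : ℝ) - 1)

/-- The criterion value `∫ Φ(C_{d,τ0,λ0}) g(dτ0)`. -/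
def PhiCrit {p t : ℕ} (n : ℕ) (S : Matrix (Fin p) (Fin p) ℝ)
    (Phi : Matrix (Fin t) (Fin t) ℝ → ℝ) (g : Measure (Fin t → ℝ)) (l0 : ℝ)
    (w : TrtSeq p t → ℝ) : ℝ :=
  ∫ τ0, Phi (CInfo n S w τ0 l0) ∂g

/-- Competing designs for a `Φ`-criterion. -/
def PhiAdmissible {p t : ℕ} (n : ℕ) (S : Matrix (Fin p) (Fin p) ℝ)
    (Phi : Matrix (Fin t) (Fin t) ℝ → ℝ) (g : Measure (Fin t → ℝ)) (l0 : ℝ)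
    (w : TrtSeq p t → ℝ) : Prop :=
  IsDesign w ∧ (∀ᵐ τ0 ∂g, 0 < τ0 ⬝ᵥ (CD n S w 1 1 *ᵥ τ0)) ∧
    Integrable (fun τ0 => Phi (CInfo n S w τ0 l0)) g

/-- `d` is `Φ_{g,λ0}`-optimal. -/
def PhiOptimal {p t : ℕ} (n : ℕ) (S : Matrix (Fin p) (Fin p) ℝ)
    (Phi : Matrix (Fin t) (Fin t) ℝ → ℝ) (g : Measure (Fin t → ℝ)) (l0 : ℝ)
    (w : TrtSeq p t → ℝ) : Prop :=
  ∀ w' : TrtSeq p t → ℝ, PhiAdmissible n S Phi g l0 w' →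
    PhiCrit n S Phi g l0 w' ≤ PhiCrit n S Phi g l0 w

/-- `H_1(s) = F_s`, `H_2(s) = T_s + λ0 F_s` (for estimating `λ`). -/
def Hmat {p t : ℕ} (l0 : ℝ) (i : Fin 2) (s : TrtSeq p t) : Matrix (Fin p) (Fin t) ℝ :=
  if i = 0 then Fmat s else Tmat s + l0 • Fmat s

/-- `Â_{sij} = B_t H_i(s)' B̃ H_j(s) B_t`. -/
def Ahat {p t : ℕ} (S : Matrix (Fin p) (Fin p) ℝ) (l0 : ℝ) (s : TrtSeq p t) (i j : Fin 2) :
    Matrix (Fin t) (Fin t) ℝ :=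
  Bmat t * (Hmat l0 i s)ᵀ * Btil S * Hmat l0 j s * Bmat t

/-- `h_{sij} = tr Â_{sij}`. -/
def hseq {p t : ℕ} (S : Matrix (Fin p) (Fin p) ℝ) (l0 : ℝ) (s : TrtSeq p t) (i j : Fin 2) : ℝ :=
  (Ahat S l0 s i j).trace

/-- `Â_{dij} = n ∑_s p_s Â_{sij}`. -/
def AhatD {p t : ℕ} (n : ℕ) (S : Matrix (Fin p) (Fin p) ℝ) (l0 : ℝ) (w : TrtSeq p t → ℝ)
    (i j : Fin 2) : Matrix (Fin t) (Fin t) ℝ :=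
  (n : ℝ) • ∑ s : TrtSeq p t, w s • Ahat S l0 s i j

/-- `A_{dij} = Â_{dij} - n (∑_s p_s H_i(s) B_t)' B̃ (∑_s p_s H_j(s) B_t)`. -/
def AD {p t : ℕ} (n : ℕ) (S : Matrix (Fin p) (Fin p) ℝ) (l0 : ℝ) (w : TrtSeq p t → ℝ)
    (i j : Fin 2) : Matrix (Fin t) (Fin t) ℝ :=
  AhatD n S l0 w i j -
    (n : ℝ) • ((∑ s : TrtSeq p t, w s • (Hmat l0 i s * Bmat t))ᵀ * Btil S *
      (∑ s : TrtSeq p t, w s • (Hmat l0 j s * Bmat t)))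

/-- `G` is a generalized inverse of `A`. -/
def IsGInv {t : ℕ} (A G : Matrix (Fin t) (Fin t) ℝ) : Prop := A * G * A = A

/-- `A_d(G) = A_{d11} - A_{d12} G A_{d21}` with `A_{d21} = A_{d12}'`. -/
def ADfun {p t : ℕ} (n : ℕ) (S : Matrix (Fin p) (Fin p) ℝ) (l0 : ℝ) (w : TrtSeq p t → ℝ)
    (G : Matrix (Fin t) (Fin t) ℝ) : Matrix (Fin t) (Fin t) ℝ :=
  AD n S l0 w 0 0 - AD n S l0 w 0 1 * G * (AD n S l0 w 0 1)ᵀ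

/-- `r_s(x) = h_{s11} + 2 h_{s12} x + h_{s22} x²`. -/
def rSeq {p t : ℕ} (S : Matrix (Fin p) (Fin p) ℝ) (l0 : ℝ) (s : TrtSeq p t) (x : ℝ) : ℝ :=
  hseq S l0 s 0 0 + 2 * hseq S l0 s 0 1 * x + hseq S l0 s 1 1 * x ^ 2

/-- `r(x) = max_s r_s(x)`. -/
def rMax (p t : ℕ) (S : Matrix (Fin p) (Fin p) ℝ) (l0 : ℝ) (x : ℝ) : ℝ :=
  sSup (Set.range fun s : TrtSeq p t => rSeq S l0 s x)

/-- `y_0 = inf_x r(x)`. -/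
def yZero (p t : ℕ) (S : Matrix (Fin p) (Fin p) ℝ) (l0 : ℝ) : ℝ := ⨅ x : ℝ, rMax p t S l0 x


lemma aux_compl_zero {t : ℕ} (ht : 3 ≤ t) (Q : Matrix (Fin t) (Fin t) ℝ)
    (hinv : ∀ (σ : Equiv.Perm (Fin t)) i j, Q (σ i) (σ j) = Q i j)
    (hrow : ∀ i, ∑ j, Q i j = 0) (htr : Q.trace = 0) : Q = 0 := by
  have ht' : (3 : ℝ) ≤ t := by exact_mod_cast ht
  have hd : ∀ i, Q i i = 0 := by
    intro i
    have h : ∀ j, Q j j = Q i i := by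
      intro j
      have := hinv (Equiv.swap i j) i i
      simpa using this
    have h2 : Q.trace = t * Q i i := by
      simp [Matrix.trace, h]
    rw [h2] at htr
    rcases mul_eq_zero.1 htr with h3 | h3
    · linarith
    · exact h3
  ext i j
  by_cases hij : j = i
  · subst hij; simpa using hd j
  have h : ∀ k, Q i k = Q i j - (if k = i then Q i j else 0) := by
    intro k
    by_cases hk : k = i
    · subst hk; simp [hd]
    · have := hinv (Equiv.swap j k) i j
      rw [Equiv.swap_apply_of_ne_of_ne (Ne.symm hij) (Ne.symm hk)] at this
      simpa [hk] using this
  have h2 := hrow i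
  rw [Finset.sum_congr rfl (fun k _ => h k), Finset.sum_sub_distrib] at h2
  simp at h2
  have h3 : ((t : ℝ) - 1) * Q i j = 0 := by linarith
  rcases mul_eq_zero.1 h3 with h4 | h4
  · linarith
  · simpa using h4

lemma aux_B_ones (t : ℕ) (ht : 3 ≤ t) : Bmat t *ᵥ (fun _ => (1:ℝ)) = 0 := by
  have ht' : (t : ℝ) ≠ 0 := by
    have : t ≠ 0 := by omega
    exact_mod_cast this
  ext i
  simp [Bmat, Jmat, Matrix.mulVec, dotProduct, Matrix.sub_apply, Finset.sum_sub_distrib,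
    Matrix.one_apply, ht']

lemma aux_B_apply (t : ℕ) (i j : Fin t) :
    Bmat t i j = (if i = j then 1 else 0) - (t : ℝ)⁻¹ := by
  simp [Bmat, Jmat, Matrix.one_apply]

lemma aux_B_symm (t : ℕ) : (Bmat t)ᵀ = Bmat t := by
  ext i j
  simp [aux_B_apply, eq_comm]

lemma aux_B_trace (t : ℕ) (ht : 3 ≤ t) : (Bmat t).trace = t - 1 := by
  have ht' : (t : ℝ) ≠ 0 := by
    have : t ≠ 0 := by omega
    exact_mod_cast this
  simp [Matrix.trace, aux_B_apply]
  field_simp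

lemma aux_compl {t : ℕ} (ht : 3 ≤ t) (Q : Matrix (Fin t) (Fin t) ℝ)
    (hinv : ∀ (σ : Equiv.Perm (Fin t)) i j, Q (σ i) (σ j) = Q i j)
    (hrow : ∀ i, ∑ j, Q i j = 0) : Q = (Q.trace / (t - 1)) • Bmat t := by
  have ht' : (3 : ℝ) ≤ t := by exact_mod_cast ht
  rw [← sub_eq_zero]
  apply aux_compl_zero ht
  · intro σ i j
    simp [aux_B_apply, hinv]
  · intro i
    have := congrFun (aux_B_ones t ht) i
    simp only [Matrix.mulVec, dotProduct, mul_one] at this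
    simp [Finset.sum_sub_distrib, hrow, ← Finset.mul_sum, this]
  · rw [Matrix.trace_sub, Matrix.trace_smul, aux_B_trace t ht, smul_eq_mul,
      div_mul_cancel₀ _ (by linarith), sub_self]

/-- Integral of a quadratic form under the prior. -/
lemma aux_integral {t : ℕ} (ht : 3 ≤ t) (g : Measure (Fin t → ℝ)) (hg : IsExchangeablePrior g)
    (hmom : Integrable (fun τ : Fin t → ℝ => τ ⬝ᵥ τ) g) :
    ∃ c : ℝ, 0 ≤ c ∧ ∀ A : Matrix (Fin t) (Fin t) ℝ, A *ᵥ (fun _ => (1:ℝ)) = 0 →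
      ∫ τ, τ ⬝ᵥ (A *ᵥ τ) ∂g = c * A.trace := by
  obtain ⟨hprob, hsupp, hperm⟩ := hg
  have ht' : (3 : ℝ) ≤ t := by exact_mod_cast ht
  have hint : ∀ i j, Integrable (fun τ : Fin t → ℝ => τ i * τ j) g := by
    intro i j
    refine hmom.mono' (by fun_prop) (Filter.Eventually.of_forall fun τ => ?_)
    have hi : ∀ i, τ i * τ i ≤ τ ⬝ᵥ τ := fun i =>
      Finset.single_le_sum (f := fun i => τ i * τ i) (fun k _ => mul_self_nonneg _)
        (Finset.mem_univ i)
    have h1 := hi i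
    have h2 := hi j
    rw [Real.norm_eq_abs, abs_le]
    constructor <;> nlinarith [sq_nonneg (τ i - τ j), sq_nonneg (τ i + τ j)]
  let M : Matrix (Fin t) (Fin t) ℝ := Matrix.of fun i j => ∫ τ, τ i * τ j ∂g
  have hM : M = (M.trace / (t - 1)) • Bmat t := by
    apply aux_compl ht
    · intro σ i j
      show ∫ τ, τ (σ i) * τ (σ j) ∂g = ∫ τ, τ i * τ j ∂g
      conv_rhs => rw [← hperm σ]
      rw [integral_map (measurable_pi_lambda _ fun i => measurable_pi_apply (σ i)).aemeasurable
        (by fun_prop)]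
    · intro i
      show ∑ j, ∫ τ, τ i * τ j ∂g = 0
      rw [← integral_finsetSum _ (fun j _ => hint i j)]
      apply integral_eq_zero_of_ae
      have : ∀ᵐ τ ∂g, ((∑ i, τ i) = 0 ∧ τ ≠ 0) := hsupp
      filter_upwards [this] with τ hτ
      rw [← Finset.mul_sum, hτ.1]; simp
  refine ⟨M.trace / (t - 1), ?_, ?_⟩
  · apply div_nonneg _ (by linarith)
    exact Finset.sum_nonneg fun i _ => integral_nonneg fun τ => mul_self_nonneg _
  · intro A hA
    have h1 : ∀ τ : Fin t → ℝ, τ ⬝ᵥ (A *ᵥ τ) = ∑ i, ∑ j, A i j * (τ i * τ j) := by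
      intro τ
      simp only [dotProduct, Matrix.mulVec, Finset.mul_sum]
      refine Finset.sum_congr rfl fun i _ => Finset.sum_congr rfl fun j _ => by ring
    simp only [h1]
    rw [integral_finsetSum Finset.univ (f := fun i (τ : Fin t → ℝ) => ∑ j, A i j * (τ i * τ j))
      (fun i _ => integrable_finsetSum _ fun j _ => (hint i j).const_mul (A i j))]
    have h2 : ∀ i, ∫ τ, ∑ j, A i j * (τ i * τ j) ∂g = (M.trace / (t - 1)) * A i i := by
      intro i
      rw [integral_finsetSum _ (fun j _ => (hint i j).const_mul _)]
      have h3 : ∀ j, ∫ τ, A i j * (τ i * τ j) ∂g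
          = A i j * ((M.trace / (t - 1)) * ((if i = j then 1 else 0) - (t : ℝ)⁻¹)) := by
        intro j
        rw [integral_const_mul, ← aux_B_apply]
        have := congrFun (congrFun hM i) j
        rw [Matrix.smul_apply, smul_eq_mul] at this
        rw [← this]; rfl
      have hAi : ∑ j, A i j = 0 := by
        have := congrFun hA i
        simpa [Matrix.mulVec, dotProduct] using this
      have h4 : ∀ j, A i j * ((M.trace / (t - 1)) * ((if i = j then 1 else 0) - (t : ℝ)⁻¹))
          = (if i = j then (M.trace / (t - 1)) * A i j else 0)
            - A i j * ((M.trace / (t - 1)) * (t : ℝ)⁻¹) := by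
        intro j
        split_ifs <;> ring
      simp only [h3, h4]
      rw [Finset.sum_sub_distrib, ← Finset.sum_mul, hAi]
      simp
    simp only [h2, ← Finset.mul_sum]
    rfl

lemma aux_Btil_psd {p : ℕ} (S : Matrix (Fin p) (Fin p) ℝ) (hp : 2 ≤ p) (hS : S.PosDef) :
    (Btil S).PosSemidef := by
  have hP : (S⁻¹).PosDef := hS.inv
  have hT : (S⁻¹)ᵀ = S⁻¹ := by simpa using hP.isHermitian.eq
  set P := S⁻¹ with hPdef
  set o : Fin p → ℝ := fun _ => 1 with ho
  have ho0 : o ≠ 0 := by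
    intro h
    have := congrFun h ⟨0, by omega⟩
    simp [ho] at this
  have hpos : 0 < o ⬝ᵥ (P *ᵥ o) := by simpa using hP.dotProduct_mulVec_pos ho0
  have hJ : Jmat p = vecMulVec o o := by ext i j; simp [Jmat, ho, vecMulVec]
  have hsym : ∀ x y : Fin p → ℝ, x ⬝ᵥ (P *ᵥ y) = y ⬝ᵥ (P *ᵥ x) := by
    intro x y
    rw [dotProduct_mulVec, ← mulVec_transpose, hT, dotProduct_comm]
  have hB : Btil S = P - (o ⬝ᵥ (P *ᵥ o))⁻¹ • (P * vecMulVec o o * P) := by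
    rw [← hJ]; rfl
  rw [hB]
  apply PosSemidef.of_dotProduct_mulVec_nonneg
  · show _ᴴ = _
    simp only [conjTranspose_eq_transpose_of_trivial, transpose_sub, transpose_smul,
      transpose_mul, hT, transpose_vecMulVec, Matrix.mul_assoc]
  · intro x
    have e : star x ⬝ᵥ ((P - (o ⬝ᵥ (P *ᵥ o))⁻¹ • (P * vecMulVec o o * P)) *ᵥ x)
        = x ⬝ᵥ (P *ᵥ x) - (o ⬝ᵥ (P *ᵥ o))⁻¹ * (o ⬝ᵥ (P *ᵥ x)) ^ 2 := by
      rw [star_trivial, sub_mulVec, dotProduct_sub, smul_mulVec, dotProduct_smul,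
        ← mulVec_mulVec, ← mulVec_mulVec, vecMulVec_mulVec]
      simp only [mulVec_smul, dotProduct_smul, smul_eq_mul, MulOpposite.smul_eq_mul_unop,
        op_smul_eq_smul, hsym x o]
      ring
    rw [e]
    have h := hP.posSemidef.dotProduct_mulVec_nonneg
      (x - ((o ⬝ᵥ (P *ᵥ o))⁻¹ * (o ⬝ᵥ (P *ᵥ x))) • o)
    simp only [star_trivial, mulVec_sub, sub_dotProduct, dotProduct_sub, mulVec_smul,
      dotProduct_smul, smul_dotProduct, smul_eq_mul, hsym x o] at h
    have hne := hpos.ne'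
    convert h using 1
    field_simp
    ring

lemma aux_cov {p t : ℕ} {ι : Type*} [Fintype ι] (B : Matrix (Fin p) (Fin p) ℝ)
    (X Z : ι → Matrix (Fin p) (Fin t) ℝ) (w : ι → ℝ) (hw : ∑ s, w s = 1) :
    ∑ s, w s • ((X s)ᵀ * B * Z s) - (∑ s, w s • X s)ᵀ * B * (∑ s, w s • Z s)
      = ∑ s, w s • ((X s - ∑ s, w s • X s)ᵀ * B * (Z s - ∑ s, w s • Z s)) := by
  set X0 := ∑ s, w s • X s with hX0
  set Z0 := ∑ s, w s • Z s with hZ0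
  have e : ∀ s, w s • ((X s - X0)ᵀ * B * (Z s - Z0)) =
      w s • ((X s)ᵀ * B * Z s) - (w s • X s)ᵀ * B * Z0 - X0ᵀ * B * (w s • Z s)
        + w s • (X0ᵀ * B * Z0) := by
    intro s
    simp only [transpose_sub, transpose_smul, Matrix.sub_mul, Matrix.mul_sub, Matrix.smul_mul,
      Matrix.mul_smul, smul_sub]
    abel
  simp only [e]
  rw [Finset.sum_add_distrib, Finset.sum_sub_distrib, Finset.sum_sub_distrib, ← Finset.sum_smul,
    hw, ← Matrix.sum_mul, ← Matrix.sum_mul, ← Matrix.mul_sum, ← transpose_sum, ← hX0, ← hZ0]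
  simp

/-- centred matrices -/
def auxY {p t : ℕ} (l0 : ℝ) (w : TrtSeq p t → ℝ) (i : Fin 2) (s : TrtSeq p t) :
    Matrix (Fin p) (Fin t) ℝ :=
  Hmat l0 i s * Bmat t - ∑ s : TrtSeq p t, w s • (Hmat l0 i s * Bmat t)

lemma aux_Ahat {p t : ℕ} (S : Matrix (Fin p) (Fin p) ℝ) (l0 : ℝ) (s : TrtSeq p t) (i j : Fin 2) :
    Ahat S l0 s i j = (Hmat l0 i s * Bmat t)ᵀ * Btil S * (Hmat l0 j s * Bmat t) := by
  rw [Ahat, transpose_mul, aux_B_symm]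
  simp only [Matrix.mul_assoc]

lemma aux_AD {p t : ℕ} (n : ℕ) (S : Matrix (Fin p) (Fin p) ℝ) (l0 : ℝ) (w : TrtSeq p t → ℝ)
    (hw : IsDesign w) (i j : Fin 2) :
    AD n S l0 w i j = (n : ℝ) • ∑ s, w s • ((auxY l0 w i s)ᵀ * Btil S * auxY l0 w j s) := by
  unfold AD AhatD auxY
  rw [← smul_sub, ← aux_cov _ _ _ _ hw.2]
  simp only [aux_Ahat]

lemma aux_Y_ones {p t : ℕ} (ht : 3 ≤ t) (l0 : ℝ) (w : TrtSeq p t → ℝ) (i : Fin 2)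
    (s : TrtSeq p t) : auxY l0 w i s *ᵥ (fun _ => (1:ℝ)) = 0 := by
  unfold auxY
  rw [sub_mulVec, sum_mulVec]
  simp [smul_mulVec, ← mulVec_mulVec, aux_B_ones t ht]

lemma aux_AD_T {p t : ℕ} (n : ℕ) (S : Matrix (Fin p) (Fin p) ℝ) (hB : (Btil S).PosSemidef)
    (l0 : ℝ) (w : TrtSeq p t → ℝ)
    (hw : IsDesign w) (i j : Fin 2) : (AD n S l0 w i j)ᵀ = AD n S l0 w j i := by
  have hT : (Btil S)ᵀ = Btil S := by simpa using hB.isHermitian.eq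
  rw [aux_AD n S l0 w hw, aux_AD n S l0 w hw]
  simp only [transpose_smul, transpose_sum, transpose_mul, transpose_transpose, hT,
    Matrix.mul_assoc]

lemma aux_AD_ones {p t : ℕ} (ht : 3 ≤ t) (n : ℕ) (S : Matrix (Fin p) (Fin p) ℝ)
    (l0 : ℝ) (w : TrtSeq p t → ℝ)
    (hw : IsDesign w) (i j : Fin 2) : AD n S l0 w i j *ᵥ (fun _ => (1:ℝ)) = 0 := by
  rw [aux_AD n S l0 w hw, smul_mulVec, sum_mulVec]
  simp [smul_mulVec, ← mulVec_mulVec, aux_Y_ones ht]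

lemma aux_ADfun_ones {p t : ℕ} (ht : 3 ≤ t) (n : ℕ) (S : Matrix (Fin p) (Fin p) ℝ)
    (hB : (Btil S).PosSemidef) (l0 : ℝ) (w : TrtSeq p t → ℝ)
    (hw : IsDesign w) (G : Matrix (Fin t) (Fin t) ℝ) :
    ADfun n S l0 w G *ᵥ (fun _ => (1:ℝ)) = 0 := by
  rw [ADfun, aux_AD_T n S hB l0 w hw, sub_mulVec, ← mulVec_mulVec, ← mulVec_mulVec,
    aux_AD_ones ht n S l0 w hw, aux_AD_ones ht n S l0 w hw]
  simp

lemma aux_A22_psd {p t : ℕ} (n : ℕ) (S : Matrix (Fin p) (Fin p) ℝ)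
    (hB : (Btil S).PosSemidef) (l0 : ℝ) (w : TrtSeq p t → ℝ)
    (hw : IsDesign w) : (AD n S l0 w 1 1).PosSemidef := by
  rw [aux_AD n S l0 w hw]
  apply PosSemidef.smul _ (Nat.cast_nonneg n)
  apply posSemidef_sum
  intro s _
  apply PosSemidef.smul _ (hw.1 s)
  simpa using hB.conjTranspose_mul_mul_same (auxY l0 w 1 s)

lemma aux_ker {p t : ℕ} (n : ℕ) (hn : 1 ≤ n) (S : Matrix (Fin p) (Fin p) ℝ)
    (hB : (Btil S).PosSemidef) (l0 : ℝ) (w : TrtSeq p t → ℝ)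
    (hw : IsDesign w) (u : Fin t → ℝ) (hu : AD n S l0 w 1 1 *ᵥ u = 0) :
    AD n S l0 w 0 1 *ᵥ u = 0 := by
  have hn' : (n : ℝ) ≠ 0 := by
    have : n ≠ 0 := by omega
    exact_mod_cast this
  rw [aux_AD n S l0 w hw] at hu ⊢
  rw [smul_mulVec, smul_eq_zero_iff_right hn'] at hu
  have h0 : ∑ s, w s * ((auxY l0 w 1 s *ᵥ u) ⬝ᵥ (Btil S *ᵥ (auxY l0 w 1 s *ᵥ u))) = 0 := by
    have := congrArg (fun v => u ⬝ᵥ v) hu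
    simp only [sum_mulVec, dotProduct_sum, dotProduct_zero, smul_mulVec, dotProduct_smul,
      smul_eq_mul] at this
    rw [← this]
    refine Finset.sum_congr rfl fun s _ => ?_
    congr 1
    rw [← mulVec_mulVec, ← mulVec_mulVec, dotProduct_mulVec u, vecMul_transpose]
  have h1 := (Finset.sum_eq_zero_iff_of_nonneg (fun s _ => mul_nonneg (hw.1 s)
    (by simpa using hB.dotProduct_mulVec_nonneg (auxY l0 w 1 s *ᵥ u)))).1 h0
  rw [smul_mulVec, sum_mulVec, Finset.sum_eq_zero, smul_zero]
  intro s hs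
  rcases mul_eq_zero.1 (h1 s hs) with h2 | h2
  · simp [h2]
  · have h3 := (hB.dotProduct_mulVec_zero_iff (auxY l0 w 1 s *ᵥ u)).1 (by simpa using h2)
    rw [smul_mulVec, ← mulVec_mulVec, ← mulVec_mulVec, h3]
    simp

lemma aux_trace_Ahat {p t : ℕ} (n : ℕ) (S : Matrix (Fin p) (Fin p) ℝ) (l0 : ℝ)
    (w : TrtSeq p t → ℝ) (i j : Fin 2) :
    (AhatD n S l0 w i j).trace = n * ∑ s, w s * hseq S l0 s i j := by
  simp [AhatD, hseq, Matrix.trace_smul, Matrix.trace_sum]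

lemma aux_le_rMax {p t : ℕ} (S : Matrix (Fin p) (Fin p) ℝ) (l0 : ℝ) (s : TrtSeq p t) (x : ℝ) :
    rSeq S l0 s x ≤ rMax p t S l0 x :=
  le_csSup (Set.finite_range _).bddAbove ⟨s, rfl⟩

lemma aux_upper {p t : ℕ} (n : ℕ) (hn : 1 ≤ n) (S : Matrix (Fin p) (Fin p) ℝ)
    (hB : (Btil S).PosSemidef) (l0 : ℝ) (w : TrtSeq p t → ℝ)
    (hw : IsDesign w) (G : Matrix (Fin t) (Fin t) ℝ) (hG : IsGInv (AD n S l0 w 1 1) G) (x : ℝ) :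
    (ADfun n S l0 w G).trace ≤ n * rMax p t S l0 x := by
  have hA := aux_A22_psd n S hB l0 w hw
  have hAT := aux_AD_T n S hB l0 w hw
  have hT : (Btil S)ᵀ = Btil S := by simpa using hB.isHermitian.eq
  set A := AD n S l0 w 1 1 with hAdef
  set N := AD n S l0 w 0 1 with hN
  have hNGA : N * G * A = N := by
    have : N * (1 - G * A) = 0 := by
      apply Matrix.ext_of_mulVec_single
      intro k
      rw [← mulVec_mulVec, zero_mulVec]
      apply aux_ker n hn S hB l0 w hw
      rw [mulVec_mulVec, ← hAdef, Matrix.mul_sub, ← Matrix.mul_assoc, hG,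
        Matrix.mul_one, sub_self, zero_mulVec]
    rw [Matrix.mul_sub, ← Matrix.mul_assoc, Matrix.mul_one, sub_eq_zero] at this
    exact this.symm
  have hATT : Aᵀ = A := hAT 1 1
  have hNT : A * (N * G)ᵀ = Nᵀ := by
    conv_rhs => rw [← hNGA]
    rw [transpose_mul (N * G), hATT]
  have hNGN : N * G * Nᵀ = (N * G) * A * (N * G)ᵀ := by
    rw [Matrix.mul_assoc (N * G) A, hNT]
  have hpos : 0 ≤ (((N * G) + x • 1) * A * ((N * G) + x • 1)ᵀ).trace := by
    have := (hA.mul_mul_conjTranspose_same ((N * G) + x • (1 : Matrix (Fin t) (Fin t) ℝ))).trace_nonneg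
    simpa using this
  have hexp : ((N * G) + x • 1) * A * ((N * G) + x • 1)ᵀ
      = N * G * Nᵀ + x • N + x • Nᵀ + (x ^ 2) • A := by
    rw [hNGN]
    simp only [transpose_add, transpose_smul, transpose_one, Matrix.add_mul, Matrix.mul_add,
      Matrix.smul_mul, Matrix.mul_smul, Matrix.one_mul, Matrix.mul_one, hNT, hNGA, smul_add, smul_smul, pow_two]
    abel
  rw [hexp] at hpos
  simp only [trace_add, trace_smul, trace_transpose, smul_eq_mul] at hpos
  have h1 : (ADfun n S l0 w G).trace ≤ (AD n S l0 w 0 0).trace + 2 * x * N.trace + x ^ 2 * A.trace := by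
    unfold ADfun
    rw [← hN, trace_sub]
    linarith
  refine h1.trans ?_
  -- drop the mean terms
  set X := ∑ s : TrtSeq p t, w s • (Hmat l0 0 s * Bmat t) with hX
  set Z := ∑ s : TrtSeq p t, w s • (Hmat l0 1 s * Bmat t) with hZ
  have hpos2 : 0 ≤ ((X + x • Z)ᵀ * Btil S * (X + x • Z)).trace := by
    simpa using (hB.conjTranspose_mul_mul_same (X + x • Z)).trace_nonneg
  have hZX : (Zᵀ * Btil S * X).trace = (Xᵀ * Btil S * Z).trace := by
    rw [← trace_transpose]
    simp only [transpose_mul, transpose_transpose, hT, Matrix.mul_assoc]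
  have hpos3 : 0 ≤ (Xᵀ * Btil S * X).trace + 2 * x * (Xᵀ * Btil S * Z).trace
      + x ^ 2 * (Zᵀ * Btil S * Z).trace := by
    simp only [transpose_add, transpose_smul, Matrix.add_mul, Matrix.mul_add,
      Matrix.smul_mul, Matrix.mul_smul, trace_add, trace_smul, smul_eq_mul, hZX] at hpos2
    linarith
  have hr : ∑ s, w s * rSeq S l0 s x ≤ rMax p t S l0 x := by
    calc ∑ s, w s * rSeq S l0 s x ≤ ∑ s, w s * rMax p t S l0 x :=
          Finset.sum_le_sum fun s _ => mul_le_mul_of_nonneg_left (aux_le_rMax S l0 s x) (hw.1 s)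
      _ = rMax p t S l0 x := by rw [← Finset.sum_mul, hw.2, one_mul]
  have hr2 : ∑ s, w s * rSeq S l0 s x = (∑ s, w s * hseq S l0 s 0 0)
      + 2 * x * (∑ s, w s * hseq S l0 s 0 1) + x ^ 2 * ∑ s, w s * hseq S l0 s 1 1 := by
    simp only [Finset.mul_sum, ← Finset.sum_add_distrib, rSeq]
    exact Finset.sum_congr rfl fun s _ => by ring
  rw [hAdef, hN]
  simp only [AD, trace_sub, trace_smul, aux_trace_Ahat, smul_eq_mul, ← hX, ← hZ]
  have hn0 : (0 : ℝ) ≤ n := Nat.cast_nonneg n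
  have e1 := mul_le_mul_of_nonneg_left hr hn0
  have e2 := mul_nonneg hn0 hpos3
  rw [hr2] at e1
  linarith

lemma aux_H_perm {p t : ℕ} (l0 : ℝ) (i : Fin 2) (s : TrtSeq p t) (σ : Equiv.Perm (Fin t))
    (k : Fin p) (a : Fin t) : Hmat l0 i (permSeq σ s) k (σ a) = Hmat l0 i s k a := by
  unfold Hmat
  split_ifs <;> simp [Tmat, Fmat, permSeq]

lemma aux_HB_perm {p t : ℕ} (l0 : ℝ) (i : Fin 2) (s : TrtSeq p t) (σ : Equiv.Perm (Fin t)) :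
    (Hmat l0 i (permSeq σ s) * Bmat t).submatrix id σ = Hmat l0 i s * Bmat t := by
  ext k a
  simp only [submatrix_apply, mul_apply, id]
  rw [← Equiv.sum_comp σ]
  refine Finset.sum_congr rfl fun b _ => ?_
  rw [aux_H_perm]
  simp [aux_B_apply]

/-- relabelling as an equivalence -/
def auxE {p t : ℕ} (σ : Equiv.Perm (Fin t)) : TrtSeq p t ≃ TrtSeq p t where
  toFun := permSeq σ
  invFun := permSeq σ⁻¹
  left_inv s := by ext k; simp [permSeq]
  right_inv s := by ext k; simp [permSeq]

lemma aux_mean {p t : ℕ} (ht : 3 ≤ t) (l0 : ℝ) (w : TrtSeq p t → ℝ) (hsym : IsSymmetricDesign w)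
    (i : Fin 2) : ∑ s : TrtSeq p t, w s • (Hmat l0 i s * Bmat t) = 0 := by
  set X := ∑ s : TrtSeq p t, w s • (Hmat l0 i s * Bmat t) with hX
  have hinv : ∀ (σ : Equiv.Perm (Fin t)) k a, X k (σ a) = X k a := by
    intro σ k a
    rw [hX, Matrix.sum_apply, Matrix.sum_apply, ← Equiv.sum_comp (auxE σ)]
    refine Finset.sum_congr rfl fun s _ => ?_
    have := congrFun (congrFun (aux_HB_perm l0 i s σ) k) a
    simp only [submatrix_apply, id] at this
    simp only [Matrix.smul_apply, auxE, Equiv.coe_fn_mk, hsym σ s, this]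
  have hone : X *ᵥ (fun _ => (1:ℝ)) = 0 := by
    rw [hX, sum_mulVec]
    simp [smul_mulVec, ← mulVec_mulVec, aux_B_ones t ht]
  ext k a
  have h : ∀ b, X k b = X k a := fun b => by simpa using hinv (Equiv.swap a b) k a
  have h2 := congrFun hone k
  simp only [mulVec, dotProduct, h, mul_one, Finset.sum_const, Finset.card_univ, Fintype.card_fin,
    Pi.zero_apply, nsmul_eq_mul] at h2
  rcases mul_eq_zero.1 h2 with h3 | h3
  · have : t = 0 := by exact_mod_cast h3
    omega
  · simpa using h3

lemma aux_AD_sym {p t : ℕ} (ht : 3 ≤ t) (n : ℕ) (S : Matrix (Fin p) (Fin p) ℝ) (l0 : ℝ)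
    (w : TrtSeq p t → ℝ) (hsym : IsSymmetricDesign w) (i j : Fin 2) :
    AD n S l0 w i j = AhatD n S l0 w i j := by
  rw [AD, aux_mean ht l0 w hsym, aux_mean ht l0 w hsym]
  simp

lemma aux_AhatD_perm {p t : ℕ} (n : ℕ) (S : Matrix (Fin p) (Fin p) ℝ) (l0 : ℝ)
    (w : TrtSeq p t → ℝ) (hsym : IsSymmetricDesign w) (i j : Fin 2) (σ : Equiv.Perm (Fin t))
    (a b : Fin t) : AhatD n S l0 w i j (σ a) (σ b) = AhatD n S l0 w i j a b := by
  simp only [AhatD, Matrix.smul_apply, Matrix.sum_apply]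
  congr 1
  rw [← Equiv.sum_comp (auxE σ)]
  refine Finset.sum_congr rfl fun s _ => ?_
  have h : Ahat S l0 (permSeq σ s) i j (σ a) (σ b) = Ahat S l0 s i j a b := by
    rw [aux_Ahat, aux_Ahat, ← aux_HB_perm l0 i s σ, ← aux_HB_perm l0 j s σ]
    simp only [mul_apply, transpose_apply, submatrix_apply, id]
  simp only [auxE, Equiv.coe_fn_mk, hsym σ s, h]

/-- a symmetric design satisfying the scalar conditions maximizes the
Bayes Fisher information for `λ` under any exchangeable prior with finite second moment. -/
theorem stmt17 (p t n : ℕ) (hp : 2 ≤ p) (ht : 3 ≤ t) (hn : 1 ≤ n)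
    (S : Matrix (Fin p) (Fin p) ℝ) (hS : S.PosDef) (l0 : ℝ)
    (g : Measure (Fin t → ℝ)) (hg : IsExchangeablePrior g)
    (hmom : Integrable (fun τ : Fin t → ℝ => τ ⬝ᵥ τ) g)
    (x0 : ℝ) (hx0 : rMax p t S l0 x0 = yZero p t S l0)
    (hx0u : ∀ x : ℝ, rMax p t S l0 x = yZero p t S l0 → x = x0)
    (w : TrtSeq p t → ℝ) (hw : IsDesign w) (hsym : IsSymmetricDesign w)
    (h1 : ∑ s ∈ Finset.univ.filter (fun s : TrtSeq p t => rSeq S l0 s x0 = yZero p t S l0),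
        w s * deriv (rSeq S l0 s) x0 = 0)
    (h2 : ∀ s : TrtSeq p t, rSeq S l0 s x0 ≠ yZero p t S l0 → w s = 0) :
    ∀ w' : TrtSeq p t → ℝ, IsDesign w' →
      ∀ G' : Matrix (Fin t) (Fin t) ℝ, IsGInv (AD n S l0 w' 1 1) G' →
      ∀ G : Matrix (Fin t) (Fin t) ℝ, IsGInv (AD n S l0 w 1 1) G →
      ∫ τ, τ ⬝ᵥ (ADfun n S l0 w' G' *ᵥ τ) ∂g ≤
        ∫ τ, τ ⬝ᵥ (ADfun n S l0 w G *ᵥ τ) ∂g := by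
  intro w' hw' G' hG' G hG
  have hB := aux_Btil_psd S hp hS
  obtain ⟨c, hc, hint⟩ := aux_integral ht g hg hmom
  rw [hint _ (aux_ADfun_ones ht n S hB l0 w' hw' G'), hint _ (aux_ADfun_ones ht n S hB l0 w hw G)]
  apply mul_le_mul_of_nonneg_left _ hc
  refine (aux_upper n hn S hB l0 w' hw' G' hG' x0).trans (le_of_eq ?_)
  have hderiv : ∀ s : TrtSeq p t, deriv (rSeq S l0 s) x0
      = 2 * hseq S l0 s 0 1 + 2 * x0 * hseq S l0 s 1 1 := by
    intro s
    have h : HasDerivAt (fun x => hseq S l0 s 0 0 + 2 * hseq S l0 s 0 1 * x + hseq S l0 s 1 1 * x ^ 2)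
        (2 * hseq S l0 s 0 1 * 1 + hseq S l0 s 1 1 * ((2 : ℕ) * x0 ^ (2 - 1))) x0 :=
      (((hasDerivAt_id' x0).const_mul _).const_add _).add ((hasDerivAt_pow 2 x0).const_mul _)
    have h' := h.deriv
    have e : rSeq S l0 s = fun x => hseq S l0 s 0 0 + 2 * hseq S l0 s 0 1 * x
        + hseq S l0 s 1 1 * x ^ 2 := rfl
    rw [e, h']
    norm_num
    ring
  have h1' : ∑ s, w s * (2 * hseq S l0 s 0 1 + 2 * x0 * hseq S l0 s 1 1) = 0 := by
    rw [← h1, Finset.sum_filter]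
    refine Finset.sum_congr rfl fun s _ => ?_
    split_ifs with h
    · rw [hderiv]
    · rw [h2 s h, zero_mul]
  have h1'' : (∑ s, w s * hseq S l0 s 0 1) + x0 * ∑ s, w s * hseq S l0 s 1 1 = 0 := by
    have e : ∑ s, w s * (2 * hseq S l0 s 0 1 + 2 * x0 * hseq S l0 s 1 1)
        = 2 * ((∑ s, w s * hseq S l0 s 0 1) + x0 * ∑ s, w s * hseq S l0 s 1 1) := by
      simp only [Finset.mul_sum, ← Finset.sum_add_distrib]
      exact Finset.sum_congr rfl fun s _ => by ring
    rw [e] at h1'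
    linarith
  have hA12 : AD n S l0 w 0 1 + x0 • AD n S l0 w 1 1 = 0 := by
    apply aux_compl_zero ht
    · intro σ a b
      simp only [Matrix.add_apply, Matrix.smul_apply, aux_AD_sym ht n S l0 w hsym,
        aux_AhatD_perm n S l0 w hsym]
    · intro a
      have e : (AD n S l0 w 0 1 + x0 • AD n S l0 w 1 1) *ᵥ (fun _ => (1:ℝ)) = 0 := by
        rw [add_mulVec, smul_mulVec, aux_AD_ones ht n S l0 w hw, aux_AD_ones ht n S l0 w hw]
        simp
      have := congrFun e a
      simpa only [mulVec, dotProduct, mul_one, Pi.zero_apply] using this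
    · rw [trace_add, trace_smul, aux_AD_sym ht n S l0 w hsym, aux_AD_sym ht n S l0 w hsym,
        aux_trace_Ahat, aux_trace_Ahat, smul_eq_mul]
      linear_combination (n : ℝ) * h1''
  have hN : AD n S l0 w 0 1 = (-x0) • AD n S l0 w 1 1 := by
    rw [neg_smul]; exact eq_neg_of_add_eq_zero_left hA12
  have hAd : ADfun n S l0 w G = AD n S l0 w 0 0 - (x0 ^ 2) • AD n S l0 w 1 1 := by
    rw [ADfun, hN, transpose_smul, aux_AD_T n S hB l0 w hw 1 1]
    simp only [Matrix.smul_mul, Matrix.mul_smul, smul_smul]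
    rw [show AD n S l0 w 1 1 * G * AD n S l0 w 1 1 = AD n S l0 w 1 1 from hG]
    congr 2
    ring
  rw [hAd, trace_sub, trace_smul, aux_AD_sym ht n S l0 w hsym, aux_AD_sym ht n S l0 w hsym,
    aux_trace_Ahat, aux_trace_Ahat, smul_eq_mul, hx0]
  have hy : ∑ s, w s * rSeq S l0 s x0 = yZero p t S l0 := by
    have e : ∀ s, w s * rSeq S l0 s x0 = w s * yZero p t S l0 := by
      intro s
      by_cases h : rSeq S l0 s x0 = yZero p t S l0
      · rw [h]
      · rw [h2 s h]; simp
    simp only [e]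
    rw [← Finset.sum_mul, hw.2, one_mul]
  have hr2 : ∑ s, w s * rSeq S l0 s x0 = (∑ s, w s * hseq S l0 s 0 0)
      + 2 * x0 * (∑ s, w s * hseq S l0 s 0 1) + x0 ^ 2 * ∑ s, w s * hseq S l0 s 1 1 := by
    simp only [Finset.mul_sum, ← Finset.sum_add_distrib, rSeq]
    exact Finset.sum_congr rfl fun s _ => by ring
  rw [← hy, hr2]
  linear_combination (2 * x0 * (n : ℝ)) * h1''
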